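/- Let k be a commutative ring and G an abelian group. For a two-cocycle σ : G × G → kˣ define b_σ(g,h) = σ(h,g)·σ(g,h)⁻¹. Then: (1) b_σ is an alternating bicharacter of G, i.e., it is multiplicative in each variable and b_σ(g,g) = 1 for all g ∈ G; (2) b_{στ} = b_σ · b_τ for the pointwise (convolution) product of two two-cocycles σ, τ; (3) if τ(g,h) = λ(g)·λ(h)·σ(g,h)·λ(gh)⁻¹ for some map λ : G → kˣ (i.e., σ and τ are cohomologous), then b_τ = b_σ; (4) every alternating bicharacter b : G × G → kˣ is of the form b_σ for some two-cocycle σ. Consequently, σ ↦ b_σ induces a surjective group homomorphism from the second cohomology group H²(G, kˣ) (with trivial G-action on kˣ) onto the group Alt²(G, kˣ) of alternating bicharacters of G. -/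

import Mathlib

section

variable (G : Type*) [CommGroup G] (k : Type*) [CommRing k]

/-- A two-cocycle on a group `G` with values in `kˣ`. -/
def IsTwoCocycle (σ : G → G → kˣ) : Prop :=
  ∀ g h l, σ g h * σ (g * h) l = σ h l * σ g (h * l)

/-- An alternating bicharacter on an abelian group `G` with values in `kˣ`. -/
def IsAltBichar (b : G → G → kˣ) : Prop :=
  (∀ g g' h, b (g * g') h = b g h * b g' h) ∧
  (∀ g h h', b g (h * h') = b g h * b g h') ∧
  (∀ g, b g g = 1)

variable {G k}

/-- The antisymmetrization `b_σ(g,h) = σ(h,g)·σ(g,h)⁻¹` of a two-cocycle. -/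
def bmap (σ : G → G → kˣ) : G → G → kˣ := fun g h => σ h g * (σ g h)⁻¹

variable (G k)

/-- The group of two-cocycles of `G` with values in `kˣ` (as a subgroup of the
group of all functions `G × G → kˣ` under pointwise multiplication). -/
def cocycleGroup : Subgroup (G → G → kˣ) where
  carrier := {σ | IsTwoCocycle G k σ}
  mul_mem' := by
    intro a b ha hb g h l
    simp only [Pi.mul_apply]
    rw [mul_mul_mul_comm, ha g h l, hb g h l, mul_mul_mul_comm]
  one_mem' := by intro g h l; simp
  inv_mem' := by
    intro a ha g h l
    simp only [Pi.inv_apply, ← mul_inv]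
    rw [ha g h l]

/-- The group of two-coboundaries `∂λ(g,h) = λ(g)·λ(h)·λ(gh)⁻¹`. -/
def coboundaryGroup : Subgroup (G → G → kˣ) where
  carrier := {τ | ∃ lam : G → kˣ, ∀ g h, τ g h = lam g * lam h * (lam (g * h))⁻¹}
  mul_mem' := by
    rintro a b ⟨la, hla⟩ ⟨lb, hlb⟩
    refine ⟨la * lb, fun g h => ?_⟩
    simp only [Pi.mul_apply, hla g h, hlb g h, mul_inv]
    simp [mul_comm, mul_left_comm, mul_assoc]
  one_mem' := ⟨fun _ => 1, by simp⟩
  inv_mem' := by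
    rintro a ⟨la, hla⟩
    refine ⟨la⁻¹, fun g h => ?_⟩
    simp only [Pi.inv_apply, hla g h, mul_inv, inv_inv]

/-- The group of alternating bicharacters of `G` with values in `kˣ`. -/
def altBicharGroup : Subgroup (G → G → kˣ) where
  carrier := {b | IsAltBichar G k b}
  mul_mem' := by
    rintro a b ⟨ha1, ha2, ha3⟩ ⟨hb1, hb2, hb3⟩
    refine ⟨fun g g' h => ?_, fun g h h' => ?_, fun g => ?_⟩
    · simp only [Pi.mul_apply, ha1 g g' h, hb1 g g' h]
      simp [mul_comm, mul_left_comm, mul_assoc]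
    · simp only [Pi.mul_apply, ha2 g h h', hb2 g h h']
      simp [mul_comm, mul_left_comm, mul_assoc]
    · simp only [Pi.mul_apply, ha3 g, hb3 g, mul_one]
  one_mem' := ⟨by simp, by simp, by simp⟩
  inv_mem' := by
    rintro a ⟨ha1, ha2, ha3⟩
    refine ⟨fun g g' h => ?_, fun g h h' => ?_, fun g => ?_⟩
    · simp only [Pi.inv_apply, ha1 g g' h, mul_inv]
    · simp only [Pi.inv_apply, ha2 g h h', mul_inv]
    · simp only [Pi.inv_apply, ha3 g, inv_one]

/-!
Multiplicativity of `b_σ` comes from three instances of the cocycle identity, and coboundaries on an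
abelian group are symmetric; the content is surjectivity. Let `B` be an alternating bilinear map on
`M`, write `M = F / N` with `F` free, and pull `B` back to `F`. There it equals `β(y, x) - β(x, y)`
for a strictly triangular bilinear `β`, which restricts to a symmetric cocycle on `N`. As a subgroup
of a free abelian group `N` is projective, so the abelian extension of `N` defined by this cocycle
splits: `β = ∂γ` on `N`. A suitable extension of `γ` to `F` makes `β - ∂γ` invariant under
translations by `N`, so that it descends to a cocycle on `M` with antisymmetrization `B`.
-/

section Cocycles

variable {G A : Type*}

/-- Two-cocycles on `G` with values in `A`, for the trivial action; `IsAddTwoCocycle` is the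
additive version. -/
@[to_additive]
def IsMulTwoCocycle [Mul G] [Mul A] (σ : G → G → A) : Prop :=
  ∀ g h l, σ g h * σ (g * h) l = σ h l * σ g (h * l)

/-- Alternating bicharacters, that is, alternating bimultiplicative maps, on `G` with values
in `A`. -/
def IsMulAltBichar [Mul G] [MulOneClass A] (b : G → G → A) : Prop :=
  (∀ g g' h, b (g * g') h = b g h * b g' h) ∧
  (∀ g h h', b g (h * h') = b g h * b g h') ∧
  (∀ g, b g g = 1)

/-- The map `b_σ` of a two-cocycle `σ`, with the sign convention of `bmap`. It is inverse to the
commutator pairing of the central extension defined by `σ`. -/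
def antisymmetrization [Div A] (σ : G → G → A) : G → G → A := fun g h => σ h g / σ g h

/-- The coboundary `∂λ` of a one-cochain, for the trivial action. -/
def mulCoboundary [Mul G] [DivInvMonoid A] (lam : G → A) : G → G → A :=
  fun g h => lam g * lam h * (lam (g * h))⁻¹

theorem antisymmetrization_mul [DivisionCommMonoid A] (σ τ : G → G → A) :
    antisymmetrization (σ * τ) = antisymmetrization σ * antisymmetrization τ :=
  funext₂ fun g h => mul_div_mul_comm (σ h g) (τ h g) (σ g h) (τ g h)

theorem antisymmetrization_mulCoboundary [CommMagma G] [CommGroup A] (lam : G → A) :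
    antisymmetrization (mulCoboundary lam) = 1 :=
  funext₂ fun g h => by
    simp only [antisymmetrization, mulCoboundary, mul_comm h g, mul_comm (lam h) (lam g),
      div_self', Pi.one_apply]

theorem IsMulTwoCocycle.antisymmetrization_mul_left [CommMagma G] [CommGroup A] {σ : G → G → A}
    (hσ : IsMulTwoCocycle σ) (g g' h : G) :
    antisymmetrization σ (g * g') h = antisymmetrization σ g h * antisymmetrization σ g' h := by
  have swap : σ (g * h) g' / σ g (h * g') = σ h g' / σ g h :=
    div_eq_div_iff_mul_eq_mul.mpr <| by rw [mul_comm, hσ]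
  calc σ h (g * g') / σ (g * g') h
    _ = (σ g g' * σ h (g * g')) / (σ g g' * σ (g * g') h) := (mul_div_mul_left_eq_div _ _ _).symm
    _ = (σ h g * σ (g * h) g') / (σ g' h * σ g (h * g')) := by
      rw [← hσ h g g', hσ g g' h, mul_comm h g, mul_comm g' h]
    _ = (σ h g / σ g' h) * (σ h g' / σ g h) := by rw [mul_div_mul_comm, swap]
    _ = (σ h g / σ g h) * (σ h g' / σ g' h) := by
      rw [div_mul_div_comm, div_mul_div_comm, mul_comm (σ g' h)]

theorem IsMulTwoCocycle.isMulAltBichar_antisymmetrization [CommMagma G] [CommGroup A]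
    {σ : G → G → A} (hσ : IsMulTwoCocycle σ) : IsMulAltBichar (antisymmetrization σ) := by
  have hinv (g h : G) : antisymmetrization σ g h = (antisymmetrization σ h g)⁻¹ :=
    (inv_div _ _).symm
  refine ⟨hσ.antisymmetrization_mul_left, fun g h h' => ?_, fun g => div_self' _⟩
  rw [hinv g (h * h'), hσ.antisymmetrization_mul_left, mul_inv, ← hinv, ← hinv]

theorem IsAddTwoCocycle.sub_coboundary {F A : Type*} [AddSemigroup F] [AddCommGroup A]
    {c : F → F → A} (hc : IsAddTwoCocycle c) (γ : F → A) :
    IsAddTwoCocycle fun x y => c x y - (γ (x + y) - γ x - γ y) := by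
  intro x y z
  simp only [add_assoc x y z]
  linear_combination (norm := abel) hc x y z

theorem IsAddTwoCocycle.exists_descent {F M A : Type*} [AddGroup F] [AddGroup M] [Add A]
    {c : F → F → A} (hc : IsAddTwoCocycle c) {π : F →+ M} (hπ : Function.Surjective π)
    (hinv : ∀ x y r s, π r = 0 → π s = 0 → c (x + r) (y + s) = c x y) :
    ∃ σ : M → M → A, IsAddTwoCocycle σ ∧ ∀ x y, σ (π x) (π y) = c x y := by
  let t := Function.surjInv hπ
  have hker (x : F) : π (-t (π x) + x) = 0 := by
    rw [map_add, map_neg, Function.surjInv_eq hπ, neg_add_cancel]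
  have hdesc (x y : F) : c (t (π x)) (t (π y)) = c x y := by
    simpa only [add_neg_cancel_left] using
      (hinv (t (π x)) (t (π y)) _ _ (hker x) (hker y)).symm
  refine ⟨fun g h => c (t g) (t h), hπ.forall₃.mpr fun x y z => ?_, hdesc⟩
  simp only [← map_add, hdesc]
  exact hc x y z

end Cocycles

section Projective

variable {N F : Type*} [AddCommGroup N] [AddCommGroup F] [Module.Projective ℤ F]

theorem exists_lift_quotient_of_divisible {D : Type*} [AddCommGroup D] [DivisibleBy D ℤ]
    (K : Submodule ℤ D) {ι : N →ₗ[ℤ] F} (hι : Function.Injective ι) (f : N →ₗ[ℤ] D ⧸ K) :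
    ∃ g : N →ₗ[ℤ] D, K.mkQ ∘ₗ g = f := by
  let : DivisibleBy (D ⧸ K) ℤ :=
    K.mkQ_surjective.divisibleBy K.mkQ fun d n => map_zsmul K.mkQ n d
  obtain ⟨f', hf'⟩ := (Module.Baer.of_divisible (D ⧸ K)).extension_property ι hι f
  obtain ⟨g, hg⟩ := Module.projective_lifting_property K.mkQ f' K.mkQ_surjective
  exact ⟨g ∘ₗ ι, by rw [← LinearMap.comp_assoc, hg, hf']⟩

theorem exists_injective_finsupp_int_to_pi_rat (X : Type*) :
    ∃ j : (X →₀ ℤ) →ₗ[ℤ] (X → ℚ), Function.Injective j :=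
  ⟨(Int.castAddHom ℚ).toIntLinearMap.compLeft X ∘ₗ Finsupp.lcoeFun,
    Int.cast_injective.comp_left.comp DFunLike.coe_injective⟩

theorem projective_int_of_injective {ι : N →ₗ[ℤ] F} (hι : Function.Injective ι) :
    Module.Projective ℤ N := by
  refine .of_lifting_property'' fun p hp => ?_
  obtain ⟨j, hj⟩ := exists_injective_finsupp_int_to_pi_rat N
  let K := p.ker.map j
  let f : N →ₗ[ℤ] (N → ℚ) ⧸ K :=
    p.ker.mapQ K j (Submodule.le_comap_map _ _) ∘ₗ (p.quotKerEquivOfSurjective hp).symm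
  have hf (x : N →₀ ℤ) : f (p x) = K.mkQ (j x) := by
    have hsymm : (p.quotKerEquivOfSurjective hp).symm (p x) = p.ker.mkQ x :=
      (LinearEquiv.symm_apply_eq _).mpr rfl
    simp [f, hsymm]
  obtain ⟨g, hg⟩ := exists_lift_quotient_of_divisible K hι f
  have hlift (n : N) : ∃ x, j x = g n ∧ p x = n := by
    obtain ⟨x, rfl⟩ := hp n
    have hmem : g (p x) - j x ∈ K :=
      (Submodule.Quotient.eq K).mp ((LinearMap.congr_fun hg (p x)).trans (hf x))
    obtain ⟨y, hy, hjy⟩ := hmem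
    exact ⟨x + y, by rw [map_add, hjy, add_sub_cancel], by
      rw [map_add, LinearMap.mem_ker.mp hy, add_zero]⟩
  have hrange (n : N) : g n ∈ j.range := (hlift n).imp fun _ => And.left
  refine ⟨g.codRestrictOfInjective j hj hrange, LinearMap.ext fun n => ?_⟩
  obtain ⟨x, hjx, hpx⟩ := hlift n
  have hsection : g.codRestrictOfInjective j hj hrange n = x :=
    hj <| by rw [LinearMap.codRestrictOfInjective_comp_apply, hjx]
  rw [LinearMap.comp_apply, hsection, hpx, LinearMap.id_apply]

end Projective

section SymmetricCocycles

variable {P A : Type*}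

/-- The extension of `P` by `A` defined by a symmetric two-cocycle `c`: the set `P × A` with
addition `(p, a) + (q, b) = (p + q, a + b + c p q)`. -/
@[ext]
structure CocycleExtension (c : P → P → A) where
  fst : P
  snd : A

namespace CocycleExtension

variable [AddCommGroup P] [AddCommGroup A] {c : P → P → A}

instance : Add (CocycleExtension c) :=
  ⟨fun u v => ⟨u.fst + v.fst, u.snd + v.snd + c u.fst v.fst⟩⟩

instance : Zero (CocycleExtension c) := ⟨⟨0, -c 0 0⟩⟩

instance : Neg (CocycleExtension c) := ⟨fun u => ⟨-u.fst, -u.snd - c (-u.fst) u.fst - c 0 0⟩⟩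

@[simp] theorem fst_add (u v : CocycleExtension c) : (u + v).fst = u.fst + v.fst := rfl

@[simp] theorem snd_add (u v : CocycleExtension c) :
    (u + v).snd = u.snd + v.snd + c u.fst v.fst := rfl

@[simp] theorem fst_zero : (0 : CocycleExtension c).fst = 0 := rfl

@[simp] theorem snd_zero : (0 : CocycleExtension c).snd = -c 0 0 := rfl

@[simp] theorem fst_neg (u : CocycleExtension c) : (-u).fst = -u.fst := rfl

@[simp] theorem snd_neg (u : CocycleExtension c) :
    (-u).snd = -u.snd - c (-u.fst) u.fst - c 0 0 := rfl

/-- The extension defined by a symmetric two-cocycle is an abelian group. -/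
abbrev addCommGroup (hc : IsAddTwoCocycle c) (hsymm : ∀ p q, c p q = c q p) :
    AddCommGroup (CocycleExtension c) where
  __ := AddGroup.ofLeftAxioms (G := CocycleExtension c)
    (fun u v w => CocycleExtension.ext (add_assoc _ _ _) <| by
      simp only [fst_add, snd_add]
      linear_combination (norm := abel) hc u.fst v.fst w.fst)
    (fun u => CocycleExtension.ext (zero_add _) <| by
      have h := hc 0 0 u.fst
      simp only [zero_add, add_left_inj] at h
      simp [h])
    (fun u => CocycleExtension.ext (neg_add_cancel _) <| by
      simp only [snd_add, fst_neg, snd_neg, snd_zero]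
      abel)
  add_comm u v := CocycleExtension.ext (add_comm _ _) <| by
    simp only [snd_add, hsymm u.fst, add_comm u.snd]

end CocycleExtension

theorem IsAddTwoCocycle.exists_eq_coboundary_of_projective [AddCommGroup P]
    [Module.Projective ℤ P] [AddCommGroup A] {c : P → P → A} (hc : IsAddTwoCocycle c)
    (hsymm : ∀ p q, c p q = c q p) :
    ∃ γ : P → A, ∀ p q, γ (p + q) = γ p + γ q + c p q := by
  let := CocycleExtension.addCommGroup hc hsymm
  let proj : CocycleExtension c →+ P := AddMonoidHom.mk' CocycleExtension.fst fun _ _ => rfl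
  obtain ⟨s, hs⟩ := Module.projective_lifting_property proj.toIntLinearMap LinearMap.id
    fun p => ⟨⟨p, 0⟩, rfl⟩
  have hfst (p : P) : (s p).fst = p := LinearMap.congr_fun hs p
  refine ⟨fun p => (s p).snd, fun p q => ?_⟩
  beta_reduce
  rw [map_add, CocycleExtension.snd_add, hfst, hfst]

end SymmetricCocycles

section Bilinear

variable {R F A : Type*} [CommRing R] [AddCommGroup F] [Module R F] [AddCommGroup A] [Module R A]

theorem isAddTwoCocycle_bilin (β : F →ₗ[R] F →ₗ[R] A) : IsAddTwoCocycle fun x y => β x y := by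
  intro x y z
  simp only [map_add, LinearMap.add_apply]
  abel

theorem exists_flip_sub_eq_of_isAlt [Module.Free R F] {B : F →ₗ[R] F →ₗ[R] A} (hB : B.IsAlt) :
    ∃ β : F →ₗ[R] F →ₗ[R] A, β.flip - β = B := by
  classical
  let e := Module.Free.chooseBasis R F
  let : LinearOrder (Module.Free.ChooseBasisIndex R F) := linearOrderOfSTO WellOrderingRel
  refine ⟨e.constr R fun i => e.constr R fun j => if j < i then B (e j) (e i) else 0,
    e.ext fun i => e.ext fun j => ?_⟩
  simp only [LinearMap.sub_apply, LinearMap.flip_apply, Module.Basis.constr_basis]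
  rcases lt_trichotomy i j with hij | rfl | hij
  · simp [hij, hij.not_gt]
  · simp [hB.self_eq_zero]
  · simp [hij, hij.not_gt, hB.neg]

theorem exists_map_add_submodule_eq (N : Submodule R F) (β : F →ₗ[R] F →ₗ[R] A) {q : N → A}
    (hq : ∀ r s, q (r + s) = q r + q s + β r s) :
    ∃ γ : F → A, ∀ x (r : N), γ (x + r) = γ x + q r + β x r := by
  let t (x : F) : F := (N.mkQ x).out
  have t_add (x : F) (r : N) : t (x + r) = t x :=
    congrArg Quotient.out <| (Submodule.Quotient.eq N).mpr <| by rw [add_sub_cancel_left]; exact r.2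
  let n (x : F) : N :=
    ⟨x - t x, (Submodule.Quotient.eq N).mp (Quotient.out_eq (N.mkQ x)).symm⟩
  have n_add (x : F) (r : N) : n (x + r) = n x + r :=
    Subtype.ext <| by simp only [n, t_add, Submodule.coe_add, add_sub_right_comm]
  have t_add_n (x : F) : t x + n x = x := add_sub_cancel _ _
  refine ⟨fun x => q (n x) + β (t x) (n x), fun x r => ?_⟩
  have hβ : β x r = β (t x) r + β (n x) r := by
    rw [← LinearMap.add_apply, ← map_add, t_add_n]
  simp only [n_add, t_add, hq, hβ, Submodule.coe_add, map_add]
  abel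

end Bilinear

section Existence

variable {F M A : Type*} [AddCommGroup F] [AddCommGroup M] [AddCommGroup A]

theorem exists_bilin_sub_coboundary_invariant [Module.Projective ℤ F] (N : Submodule ℤ F)
    {β : F →ₗ[ℤ] F →ₗ[ℤ] A} (hβ : ∀ x, ∀ r ∈ N, β r x = β x r) :
    ∃ γ : F → A, ∀ x y, ∀ r ∈ N, ∀ s ∈ N,
      β (x + r) (y + s) - (γ (x + r + (y + s)) - γ (x + r) - γ (y + s)) =
        β x y - (γ (x + y) - γ x - γ y) := by
  have : Module.Projective ℤ N := projective_int_of_injective N.injective_subtype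
  have hcocycle : IsAddTwoCocycle fun r s : N => β r s :=
    isAddTwoCocycle_bilin (β.domRestrict₁₂ N N)
  obtain ⟨q, hq⟩ := hcocycle.exists_eq_coboundary_of_projective fun r s => hβ s r r.2
  obtain ⟨γ, hγ⟩ := exists_map_add_submodule_eq N β hq
  refine ⟨γ, fun x y r hr s hs => ?_⟩
  lift r to N using hr
  lift s to N using hs
  rw [add_add_add_comm, ← Submodule.coe_add, hγ, hγ, hγ, hq]
  simp only [Submodule.coe_add, map_add, LinearMap.add_apply, hβ y r r.2]
  abel

theorem exists_isAddTwoCocycle_sub_eq_of_isAlt {B : M →ₗ[ℤ] M →ₗ[ℤ] A} (hB : B.IsAlt) :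
    ∃ σ : M → M → A, IsAddTwoCocycle σ ∧ ∀ g h, σ h g - σ g h = B g h := by
  let π : (M →₀ ℤ) →ₗ[ℤ] M := Finsupp.linearCombination ℤ id
  have hπ : Function.Surjective π := Finsupp.linearCombination_id_surjective ℤ M
  have hBπ : (B.compl₁₂ π π).IsAlt := fun x => hB (π x)
  obtain ⟨β, hβ⟩ := exists_flip_sub_eq_of_isAlt hBπ
  replace hβ (x y) : β y x - β x y = B (π x) (π y) := LinearMap.congr_fun₂ hβ x y
  have hker (x r) (hr : r ∈ π.ker) : β r x = β x r :=
    sub_eq_zero.mp <| by rw [hβ, LinearMap.mem_ker.mp hr, map_zero]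
  obtain ⟨γ, hγ⟩ := exists_bilin_sub_coboundary_invariant π.ker hker
  obtain ⟨σ, hσ, hσπ⟩ := ((isAddTwoCocycle_bilin β).sub_coboundary γ).exists_descent
    (π := π.toAddMonoidHom) hπ fun x y r s hr hs => hγ x y r hr s hs
  refine ⟨σ, hσ, hπ.forall₂.mpr fun x y => ?_⟩
  calc σ (π y) (π x) - σ (π x) (π y)
    _ = (β y x - (γ (y + x) - γ y - γ x)) - (β x y - (γ (x + y) - γ x - γ y)) :=
      congrArg₂ _ (hσπ y x) (hσπ x y)
    _ = β y x - β x y := by rw [add_comm y x]; abel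
    _ = B (π x) (π y) := hβ x y

end Existence

section Cohomology

variable {G A : Type*} [CommGroup G] [CommGroup A]

theorem IsMulAltBichar.exists_antisymmetrization_eq {b : G → G → A} (hb : IsMulAltBichar b) :
    ∃ σ : G → G → A, IsMulTwoCocycle σ ∧ antisymmetrization σ = b := by
  obtain ⟨map_mul_left, map_mul_right, map_self⟩ := hb
  let B : Additive G →ₗ[ℤ] Additive G →ₗ[ℤ] Additive A :=
    (AddMonoidHom.mk' (fun g : Additive G =>
      (AddMonoidHom.mk' (fun h : Additive G => Additive.ofMul (b g.toMul h.toMul))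
        fun h h' => map_mul_right g.toMul h.toMul h'.toMul).toIntLinearMap)
      fun g g' => LinearMap.ext fun h => map_mul_left g.toMul g'.toMul h.toMul).toIntLinearMap
  have hB : B.IsAlt := fun g => map_self g.toMul
  obtain ⟨σ, hσ, hσB⟩ := exists_isAddTwoCocycle_sub_eq_of_isAlt hB
  exact ⟨fun g h => (σ (.ofMul g) (.ofMul h)).toMul, hσ,
    funext₂ fun g h => hσB (.ofMul g) (.ofMul h)⟩

variable (G A)

/-- The group `Z²(G, A)` for the trivial action of `G` on `A`. -/
def mulTwoCocycles : Subgroup (G → G → A) where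
  carrier := {σ | IsMulTwoCocycle σ}
  mul_mem' {σ τ} hσ hτ g h l := by
    simp only [Pi.mul_apply]
    rw [mul_mul_mul_comm, hσ g h l, hτ g h l, mul_mul_mul_comm]
  one_mem' _ _ _ := rfl
  inv_mem' {σ} hσ g h l := by
    simp only [Pi.inv_apply, ← mul_inv, hσ g h l]

/-- The group `B²(G, A)` for the trivial action of `G` on `A`. -/
def mulTwoCoboundaries : Subgroup (G → G → A) where
  carrier := {τ | ∃ lam : G → A, ∀ g h, τ g h = mulCoboundary lam g h}
  mul_mem' := by
    rintro _ _ ⟨lam, hlam⟩ ⟨mu, hmu⟩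
    refine ⟨lam * mu, fun g h => ?_⟩
    simp only [mulCoboundary, Pi.mul_apply, hlam, hmu, mul_inv, mul_mul_mul_comm]
  one_mem' := ⟨1, fun g h => by simp [mulCoboundary]⟩
  inv_mem' := by
    rintro _ ⟨lam, hlam⟩
    exact ⟨lam⁻¹, fun g h => by simp only [mulCoboundary, Pi.inv_apply, hlam, mul_inv]⟩

/-- The group `Alt²(G, A)` of alternating bicharacters on `G` with values in `A`. -/
def mulAltBichars : Subgroup (G → G → A) where
  carrier := {b | IsMulAltBichar b}
  mul_mem' := by
    rintro b c ⟨hb_left, hb_right, hb_self⟩ ⟨hc_left, hc_right, hc_self⟩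
    exact ⟨fun g g' h => by simp only [Pi.mul_apply, hb_left, hc_left, mul_mul_mul_comm],
      fun g h h' => by simp only [Pi.mul_apply, hb_right, hc_right, mul_mul_mul_comm],
      fun g => by simp only [Pi.mul_apply, hb_self, hc_self, mul_one]⟩
  one_mem' := by simp [IsMulAltBichar]
  inv_mem' := by
    rintro b ⟨hb_left, hb_right, hb_self⟩
    exact ⟨fun g g' h => by simp only [Pi.inv_apply, hb_left, mul_inv],
      fun g h h' => by simp only [Pi.inv_apply, hb_right, mul_inv],
      fun g => by simp only [Pi.inv_apply, hb_self, inv_one]⟩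

/-- The homomorphism `Z²(G, A) → Alt²(G, A)`, `σ ↦ b_σ`. -/
def antisymmetrizationHom : mulTwoCocycles G A →* mulAltBichars G A :=
  MonoidHom.mk' (fun σ => ⟨antisymmetrization σ.1, σ.2.isMulAltBichar_antisymmetrization⟩)
    fun σ τ => Subtype.ext (antisymmetrization_mul σ.1 τ.1)

theorem mulTwoCoboundaries_subgroupOf_le_ker_antisymmetrizationHom :
    (mulTwoCoboundaries G A).subgroupOf (mulTwoCocycles G A) ≤ (antisymmetrizationHom G A).ker := by
  rintro ⟨τ, hτ⟩ ⟨lam, hlam⟩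
  obtain rfl : τ = mulCoboundary lam := funext₂ hlam
  exact Subtype.ext (antisymmetrization_mulCoboundary lam)

theorem antisymmetrizationHom_surjective : Function.Surjective (antisymmetrizationHom G A) := by
  rintro ⟨b, hb⟩
  obtain ⟨σ, hσ, hσb⟩ := hb.exists_antisymmetrization_eq
  exact ⟨⟨σ, hσ⟩, Subtype.ext hσb⟩

theorem bmap_induces_surjection_H2_onto_Alt2_general :
    (∀ σ : G → G → A, IsMulTwoCocycle σ → IsMulAltBichar (antisymmetrization σ)) ∧
    (∀ σ τ : G → G → A,
      antisymmetrization (σ * τ) = antisymmetrization σ * antisymmetrization τ) ∧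
    (∀ (σ τ : G → G → A) (lam : G → A),
      (∀ g h, τ g h = lam g * lam h * σ g h * (lam (g * h))⁻¹) →
        antisymmetrization τ = antisymmetrization σ) ∧
    (∀ b : G → G → A, IsMulAltBichar b →
      ∃ σ : G → G → A, IsMulTwoCocycle σ ∧ antisymmetrization σ = b) ∧
    ∃ Φ : (mulTwoCocycles G A ⧸ (mulTwoCoboundaries G A).subgroupOf (mulTwoCocycles G A)) →*
        mulAltBichars G A,
      Function.Surjective Φ ∧
      ∀ σ : mulTwoCocycles G A,
        (Φ (QuotientGroup.mk σ) : G → G → A) = antisymmetrization (σ : G → G → A) := by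
  refine ⟨fun σ hσ => hσ.isMulAltBichar_antisymmetrization, antisymmetrization_mul,
    fun σ τ lam hτ => ?_, fun b hb => hb.exists_antisymmetrization_eq,
    QuotientGroup.lift _ (antisymmetrizationHom G A)
      (mulTwoCoboundaries_subgroupOf_le_ker_antisymmetrizationHom G A),
    QuotientGroup.lift_surjective_of_surjective _ _ (antisymmetrizationHom_surjective G A) _,
    fun σ => rfl⟩
  have hτ_eq : τ = mulCoboundary lam * σ :=
    funext₂ fun g h => (hτ g h).trans (mul_right_comm _ _ _)
  rw [hτ_eq, antisymmetrization_mul, antisymmetrization_mulCoboundary, one_mul]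

end Cohomology

/-- the antisymmetrization `σ ↦ b_σ` of two-cocycles: (1) `b_σ` is an
alternating bicharacter; (2) it is multiplicative in `σ`; (3) it only depends on
the cohomology class of `σ`; (4) every alternating bicharacter arises this way.
Consequently it induces a surjective group homomorphism from
`H²(G, kˣ) = Z²(G,kˣ)/B²(G,kˣ)` onto the group `Alt²(G, kˣ)`. -/
theorem bmap_induces_surjection_H2_onto_Alt2 :
    (∀ σ : G → G → kˣ, IsTwoCocycle G k σ → IsAltBichar G k (bmap σ)) ∧
    (∀ σ τ : G → G → kˣ, IsTwoCocycle G k σ → IsTwoCocycle G k τ →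
      bmap (σ * τ) = fun g h => bmap σ g h * bmap τ g h) ∧
    (∀ (σ τ : G → G → kˣ) (lam : G → kˣ), IsTwoCocycle G k σ →
      (∀ g h, τ g h = lam g * lam h * σ g h * (lam (g * h))⁻¹) → bmap τ = bmap σ) ∧
    (∀ b : G → G → kˣ, IsAltBichar G k b →
      ∃ σ : G → G → kˣ, IsTwoCocycle G k σ ∧ bmap σ = b) ∧
    ∃ Φ : (cocycleGroup G k ⧸ (coboundaryGroup G k).subgroupOf (cocycleGroup G k)) →*
        altBicharGroup G k,
      Function.Surjective Φ ∧
      ∀ σ : cocycleGroup G k,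
        ((Φ (QuotientGroup.mk σ) : altBicharGroup G k) : G → G → kˣ) = bmap (σ : G → G → kˣ) := by
  obtain ⟨h_bichar, h_mul, h_cohomologous, h_exists, h_H2⟩ :=
    bmap_induces_surjection_H2_onto_Alt2_general G kˣ
  exact ⟨h_bichar, fun σ τ _ _ => h_mul σ τ, fun σ τ lam _ => h_cohomologous σ τ lam,
    h_exists, h_H2⟩

end
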